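/- Let D be the open unit disk in ℂ and D₊ = {z ∈ D : Im z > 0}. Let f: closure(D₊) → ℂ be continuous, C¹ on D₊, with f(z) ∈ ℝ whenever z ∈ D ∩ ℝ. Assume there is a continuous non-negative function h on the closed unit disk such that |∂_{z̄} f(z)| ≤ h(z)·|f(z)| for all z ∈ D₊, where ∂_{z̄} = ½(∂_x + i·∂_y). Assume f(0) = 0. Then either f vanishes identically on V ∩ closure(D₊) for some open neighborhood V of 0, or there exist an integer k ≥ 1, an open neighborhood V of 0, and a continuous function f̃ on V ∩ closure(D₊) with f̃(0) ≠ 0, such that f(z) = z^k · f̃(z) for all z ∈ V ∩ closure(D₊). -/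

import Mathlib

/-- Wirtinger derivative `∂_z̄ = ½(∂_x + i ∂_y)`. -/
noncomputable def wDzbar (F : ℂ → ℂ) (z : ℂ) : ℂ :=
  (fderiv ℝ F z 1 + Complex.I * fderiv ℝ F z Complex.I) / 2

/-!
Schwarz reflection extends `f` to a continuous function `F` on a disk with `∂_z̄ F = a F` off the
real axis, where `a` is bounded and measurable but in general not continuous. Let `bₙ` be
mollifications of `a`. By Pompeiu's formula the Cauchy transform `vₙ` of `bₙ` satisfies
`∂_z̄ vₙ = bₙ`, and since `bₙ` is bounded uniformly in `n` and tends to `a` in `L¹`, `vₙ` converges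
uniformly to the Cauchy transform `u` of `a`. Then `∂_z̄ (e^{-vₙ} F) = e^{-vₙ} F (a - bₙ)` tends to
`0` in `L¹`, so by Stokes' theorem `e^{-u} F` integrates to `0` around every rectangle whose
interior misses the real axis; cutting along the axis, this extends to all rectangles. By Morera's
theorem `e^{-u} F` is holomorphic, and factoring out its zero at `0` gives `f = z^k e^u g` with
`g(0) ≠ 0`.
-/

section SimilarityPrinciple

open MeasureTheory Set Metric Filter Topology
open scoped Real ComplexConjugate

section CauchyTransform

lemma integrableOn_inv_ball (ε : ℝ) : IntegrableOn (fun w : ℂ ↦ w⁻¹) (ball 0 ε) := by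
  have hnorm : IntegrableOn (fun w : ℂ ↦ ‖w‖⁻¹) (ball 0 ε) := by
    rw [integrableOn_fun_norm_addHaar volume (f := fun r ↦ r⁻¹), Complex.finrank_real_complex]
    refine (integrableOn_const (C := (1 : ℝ)) measure_Ioo_lt_top.ne).congr_fun ?_ measurableSet_Ioo
    intro r hr
    simp [hr.1.ne']
  exact hnorm.mono' measurable_inv.aestronglyMeasurable (.of_forall fun w ↦ (norm_inv w).le)

lemma setIntegral_norm_inv_ball {ε : ℝ} (hε : 0 ≤ ε) :
    ∫ w in ball (0 : ℂ) ε, ‖w⁻¹‖ = 2 * π * ε := by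
  have hradial (w : ℂ) :
      (ball (0 : ℂ) ε).indicator (fun w ↦ ‖w⁻¹‖) w = (Iio ε).indicator (fun r ↦ r⁻¹) ‖w‖ := by
    simp [indicator]
  have hcancel : ∀ r ∈ Ioi (0 : ℝ),
      r ^ (2 - 1) • (Iio ε).indicator (fun r ↦ r⁻¹) r = (Iio ε).indicator 1 r := by
    intro r (hr : 0 < r)
    by_cases hrε : r < ε <;> simp [hrε, hr.ne']
  have hlength : ∫ r in Ioi (0 : ℝ), (Iio ε).indicator (1 : ℝ → ℝ) r = ε := by
    rw [setIntegral_indicator measurableSet_Iio, Ioi_inter_Iio]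
    simp [hε]
  rw [← integral_indicator measurableSet_ball, funext hradial,
    integral_fun_norm_addHaar volume ((Iio ε).indicator fun r ↦ r⁻¹), Complex.finrank_real_complex,
    setIntegral_congr_fun measurableSet_Ioi hcancel, hlength]
  simp [measureReal_def, Complex.volume_ball, mul_assoc]

lemma locallyIntegrable_inv : LocallyIntegrable (fun w : ℂ ↦ w⁻¹) := fun x ↦
  ⟨ball 0 (‖x‖ + 1), isOpen_ball.mem_nhds (by simp), integrableOn_inv_ball _⟩

/-- The Cauchy transform of `g`, the convolution of `g` with the fundamental solution `1 / (π w)` of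
the operator `∂_z̄`. It is used for integrable bounded `g`, where the integral converges. -/
noncomputable def cauchyTransform (g : ℂ → ℂ) (z : ℂ) : ℂ := (π : ℂ)⁻¹ * ∫ w, w⁻¹ * g (z - w)

variable {g : ℂ → ℂ} {C ε : ℝ}

lemma norm_inv_mul_le_indicator_add (hC : ∀ z, ‖g z‖ ≤ C) (hε : 0 < ε) (z w : ℂ) :
    ‖w⁻¹ * g (z - w)‖ ≤ (ball 0 ε).indicator (fun w ↦ C * ‖w⁻¹‖) w + ε⁻¹ * ‖g (z - w)‖ := by
  rw [norm_mul]
  by_cases hw : w ∈ ball 0 ε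
  · rw [indicator_of_mem hw, mul_comm C]
    exact le_add_of_le_of_nonneg (by gcongr; exact hC _) (by positivity)
  · rw [indicator_of_notMem hw, zero_add, norm_inv]
    rw [mem_ball_zero_iff, not_lt] at hw
    gcongr

lemma integrable_indicator_const_mul_norm_inv (C ε : ℝ) :
    Integrable ((ball 0 ε).indicator fun w : ℂ ↦ C * ‖w⁻¹‖) :=
  IntegrableOn.integrable_indicator ((integrableOn_inv_ball ε).norm.const_mul C) measurableSet_ball

lemma integrable_indicator_const_mul_norm_inv_add (hg : Integrable g) (C ε : ℝ) (z : ℂ) :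
    Integrable fun w ↦ (ball 0 ε).indicator (fun w ↦ C * ‖w⁻¹‖) w + ε⁻¹ * ‖g (z - w)‖ :=
  (integrable_indicator_const_mul_norm_inv C ε).add ((hg.comp_sub_left z).norm.const_mul _)

lemma integrable_inv_mul_comp_sub_left (hg : Integrable g) (hC : ∀ z, ‖g z‖ ≤ C) (z : ℂ) :
    Integrable fun w ↦ w⁻¹ * g (z - w) :=
  (integrable_indicator_const_mul_norm_inv_add hg C 1 z).mono'
    (measurable_inv.aestronglyMeasurable.mul (hg.comp_sub_left z).1)
    (.of_forall fun w ↦ norm_inv_mul_le_indicator_add hC one_pos z w)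

lemma norm_cauchyTransform_le (hg : Integrable g) (hC : ∀ z, ‖g z‖ ≤ C) (hε : 0 < ε) (z : ℂ) :
    ‖cauchyTransform g z‖ ≤ 2 * C * ε + ε⁻¹ * ∫ w, ‖g w‖ := by
  have hintegral : ‖∫ w, w⁻¹ * g (z - w)‖ ≤ C * (2 * π * ε) + ε⁻¹ * ∫ w, ‖g w‖ := by
    refine (norm_integral_le_of_norm_le (integrable_indicator_const_mul_norm_inv_add hg C ε z)
      (.of_forall fun w ↦ norm_inv_mul_le_indicator_add hC hε z w)).trans_eq ?_
    rw [integral_add, integral_indicator measurableSet_ball, integral_const_mul, integral_const_mul,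
      integral_sub_left_eq_self (fun w ↦ ‖g w‖) volume z, setIntegral_norm_inv_ball hε.le]
    · exact integrable_indicator_const_mul_norm_inv C ε
    · exact (hg.comp_sub_left z).norm.const_mul _
  have hmass : 0 ≤ ε⁻¹ * ∫ w, ‖g w‖ := by positivity
  rw [cauchyTransform, norm_mul, norm_inv, Complex.norm_of_nonneg Real.pi_nonneg]
  calc π⁻¹ * ‖∫ w, w⁻¹ * g (z - w)‖ ≤ π⁻¹ * (C * (2 * π * ε) + ε⁻¹ * ∫ w, ‖g w‖) := by gcongr
    _ = 2 * C * ε + π⁻¹ * (ε⁻¹ * ∫ w, ‖g w‖) := by field_simp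
    _ ≤ 2 * C * ε + ε⁻¹ * ∫ w, ‖g w‖ := add_le_add le_rfl
        (mul_le_of_le_one_left hmass (inv_le_one_of_one_le₀ (one_le_two.trans Real.two_le_pi)))

lemma norm_cauchyTransform_le_sqrt (hg : Integrable g) (hC : ∀ z, ‖g z‖ ≤ C) (z : ℂ) :
    ‖cauchyTransform g z‖ ≤ (2 * C + 1) * √(∫ w, ‖g w‖) := by
  have hmass : 0 ≤ ∫ w, ‖g w‖ := by positivity
  rcases hmass.eq_or_lt with hzero | hpos
  · have hnull : g =ᵐ[volume] 0 := by
      filter_upwards [(integral_eq_zero_iff_of_nonneg (fun _ ↦ norm_nonneg _) hg.norm).1 hzero.symm]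
        with w hw using norm_eq_zero.1 hw
    have hnull_sub : (fun w ↦ w⁻¹ * g (z - w)) =ᵐ[volume] 0 := by
      filter_upwards [(quasiMeasurePreserving_sub_left volume z).ae hnull] with w hw
      simp_all
    rw [cauchyTransform, integral_congr_ae hnull_sub, ← hzero]
    simp
  · have hsqrt : 0 < √(∫ w, ‖g w‖) := Real.sqrt_pos.2 hpos
    refine (norm_cauchyTransform_le hg hC hsqrt z).trans_eq ?_
    rw [inv_mul_eq_div, Real.div_sqrt]
    ring

lemma cauchyTransform_sub {g₁ g₂ : ℂ → ℂ} {C₁ C₂ : ℝ} (hg₁ : Integrable g₁) (hg₂ : Integrable g₂)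
    (hC₁ : ∀ z, ‖g₁ z‖ ≤ C₁) (hC₂ : ∀ z, ‖g₂ z‖ ≤ C₂) (z : ℂ) :
    cauchyTransform (fun w ↦ g₁ w - g₂ w) z = cauchyTransform g₁ z - cauchyTransform g₂ z := by
  simp only [cauchyTransform, mul_sub]
  rw [integral_sub (integrable_inv_mul_comp_sub_left hg₁ hC₁ z)
    (integrable_inv_mul_comp_sub_left hg₂ hC₂ z), mul_sub]

lemma tendstoUniformly_cauchyTransform {ι : Type*} {l : Filter ι} {b : ι → ℂ → ℂ} {a : ℂ → ℂ}
    {M : ℝ} (ha : Integrable a) (hb : ∀ n, Integrable (b n)) (haM : ∀ z, ‖a z‖ ≤ M)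
    (hbM : ∀ n z, ‖b n z‖ ≤ M) (hlim : Tendsto (fun n ↦ ∫ z, ‖b n z - a z‖) l (𝓝 0)) :
    TendstoUniformly (fun n ↦ cauchyTransform (b n)) (cauchyTransform a) l := by
  have hdist (n : ι) (z : ℂ) : dist (cauchyTransform a z) (cauchyTransform (b n) z) ≤
      (2 * (M + M) + 1) * √(∫ z, ‖b n z - a z‖) := by
    rw [dist_comm, dist_eq_norm, ← cauchyTransform_sub (hb n) ha (hbM n) haM]
    exact norm_cauchyTransform_le_sqrt ((hb n).sub ha)
      (fun w ↦ (norm_sub_le _ _).trans (add_le_add (hbM n w) (haM w))) z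
  have hbound : Tendsto (fun n ↦ (2 * (M + M) + 1) * √(∫ z, ‖b n z - a z‖)) l (𝓝 0) := by
    simpa using hlim.sqrt.const_mul (2 * (M + M) + 1)
  rw [Metric.tendstoUniformly_iff]
  intro δ hδ
  filter_upwards [hbound.eventually_lt_const hδ] with n hn z using (hdist n z).trans_lt hn

end CauchyTransform

section Pompeiu

open Complex

lemma clm_apply_add_I_mul_apply (L : ℂ →L[ℝ] ℂ) (e : ℂ) :
    L e + I * L (I * e) = conj e * (L 1 + I * L I) := by
  have hcoord (x y : ℝ) : L (x + y * I) = x * L 1 + y * L I := by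
    simpa using congrArg₂ (· + ·) (L.map_smul x 1) (L.map_smul y I)
  have hrotate : I * (e.re + e.im * I) = (-e.im : ℝ) + e.re * I := by
    push_cast
    linear_combination e.im * I_sq
  rw [← re_add_im e, hrotate, hcoord, hcoord, map_add, map_mul, conj_ofReal, conj_ofReal, conj_I]
  push_cast
  linear_combination e.im * L I * I_sq

lemma integral_Ioi_fderiv_sub_smul {E F : Type*} [NormedAddCommGroup E] [NormedSpace ℝ E]
    [NormedAddCommGroup F] [NormedSpace ℝ F] [CompleteSpace F] {g : E → F} (hg : ContDiff ℝ 1 g)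
    (hgc : HasCompactSupport g) (z : E) {e : E} (he : e ≠ 0) :
    ∫ r : ℝ in Ioi 0, fderiv ℝ g (z - r • e) e = g z := by
  have hderiv (r : ℝ) : deriv (fun r : ℝ ↦ g (z - r • e)) r = -fderiv ℝ g (z - r • e) e := by
    have hline : HasDerivAt (fun r : ℝ ↦ z - r • e) (-e) r := by
      simpa using ((hasDerivAt_id r).smul_const e).const_sub z
    have hchain := (hg.differentiable one_ne_zero (z - r • e)).hasFDerivAt.comp_hasDerivAt r hline
    rw [map_neg] at hchain
    exact hchain.deriv
  have hcompact : HasCompactSupport fun r : ℝ ↦ g (z - r • e) :=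
    hgc.comp_isClosedEmbedding
      ((Homeomorph.subLeft z).isClosedEmbedding.comp (isClosedEmbedding_smul_left he))
  have hftc := hcompact.integral_Ioi_deriv_eq (by fun_prop) 0
  simp only [hderiv, integral_neg, zero_smul, sub_zero, neg_inj] at hftc
  exact hftc

lemma integral_fderiv_circleMap {F : Type*} [NormedAddCommGroup F] [NormedSpace ℝ F]
    [CompleteSpace F] {g : ℂ → F} (hg : ContDiff ℝ 1 g) (z : ℂ) (R : ℝ) :
    ∫ θ in -π..π, fderiv ℝ g (circleMap z R θ) (circleMap 0 R θ * I) = 0 := by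
  have hderiv (θ : ℝ) : HasDerivAt (fun θ ↦ g (circleMap z R θ))
      (fderiv ℝ g (circleMap z R θ) (circleMap 0 R θ * I)) θ :=
    (hg.differentiable one_ne_zero _).hasFDerivAt.comp_hasDerivAt θ (hasDerivAt_circleMap z R θ)
  have hcont : Continuous fun θ ↦ fderiv ℝ g (circleMap z R θ) (circleMap 0 R θ * I) :=
    ((hg.continuous_fderiv one_ne_zero).comp (continuous_circleMap z R)).clm_apply
      ((continuous_circleMap 0 R).mul continuous_const)
  rw [intervalIntegral.integral_eq_sub_of_hasDerivAt (fun θ _ ↦ hderiv θ)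
    (hcont.intervalIntegrable _ _), sub_eq_zero, ← periodic_circleMap z R (-π)]
  ring_nf

lemma integrableOn_polar_clm_apply {F : Type*} [NormedAddCommGroup F] [NormedSpace ℝ F]
    {φ : ℂ → ℂ →L[ℝ] F} (hφ : Continuous φ) (hφc : HasCompactSupport φ) {v : ℝ → ℂ}
    (hv : Continuous v) (z : ℂ) :
    IntegrableOn (fun p : ℝ × ℝ ↦ φ (z - p.1 * exp (p.2 * I)) (v p.2)) polarCoord.target := by
  obtain ⟨R, hR⟩ := hφc.isCompact.isBounded.subset_closedBall z
  have hvanish (r θ : ℝ) (hr : R < r) : φ (z - r * exp (θ * I)) = 0 := by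
    refine image_eq_zero_of_notMem_tsupport fun hmem ↦ ?_
    have hle := hR hmem
    simp only [mem_closedBall, dist_self_sub_left, norm_mul, norm_real, norm_exp_ofReal_mul_I,
      mul_one, Real.norm_eq_abs] at hle
    exact (hr.trans_le ((le_abs_self r).trans hle)).false
  have hbox : IntegrableOn (fun p : ℝ × ℝ ↦ φ (z - p.1 * exp (p.2 * I)) (v p.2))
      (Icc 0 R ×ˢ Icc (-π) π) :=
    (by fun_prop : Continuous _).continuousOn.integrableOn_compact
      (isCompact_Icc.prod isCompact_Icc)
  refine hbox.of_forall_sdiff_eq_zero (measurableSet_Ioi.prod measurableSet_Ioo) ?_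
  rintro ⟨r, θ⟩ ⟨⟨hr, hθ⟩, hout⟩
  have hRr : R < r := by
    by_contra! hle
    exact hout ⟨⟨le_of_lt hr, hle⟩, Ioo_subset_Icc_self hθ⟩
  simp [hvanish r θ hRr]

variable {g : ℂ → ℂ}

lemma integral_polar_fderiv_radial (hg : ContDiff ℝ 1 g) (hgc : HasCompactSupport g) (z : ℂ) :
    ∫ p in polarCoord.target, fderiv ℝ g (z - p.1 * exp (p.2 * I)) (exp (p.2 * I)) =
      2 * π * g z := by
  have hint := integrableOn_polar_clm_apply (hg.continuous_fderiv one_ne_zero) (hgc.fderiv ℝ)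
    (v := fun θ ↦ exp (θ * I)) (by fun_prop) z
  have hray (θ : ℝ) :
      ∫ r : ℝ in Ioi 0, fderiv ℝ g (z - r * exp (θ * I)) (exp (θ * I)) = g z := by
    simpa only [real_smul] using integral_Ioi_fderiv_sub_smul hg hgc z (exp_ne_zero (θ * I))
  rw [polarCoord_target, Measure.volume_eq_prod] at hint ⊢
  rw [← Measure.prod_restrict, integral_prod_symm _ (by rwa [Measure.prod_restrict])]
  simp only [hray, integral_const, measureReal_restrict_apply_univ, Real.volume_real_Ioo,
    sub_neg_eq_add, ← two_mul, max_eq_left Real.two_pi_pos.le, real_smul]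
  push_cast
  rfl

lemma integral_polar_fderiv_angular (hg : ContDiff ℝ 1 g) (hgc : HasCompactSupport g) (z : ℂ) :
    ∫ p in polarCoord.target, fderiv ℝ g (z - p.1 * exp (p.2 * I)) (I * exp (p.2 * I)) = 0 := by
  have hint := integrableOn_polar_clm_apply (hg.continuous_fderiv one_ne_zero) (hgc.fderiv ℝ)
    (v := fun θ ↦ I * exp (θ * I)) (by fun_prop) z
  have hcircle (r : ℝ) (hr : r ∈ Ioi 0) :
      ∫ θ in Ioo (-π) π, fderiv ℝ g (z - r * exp (θ * I)) (I * exp (θ * I)) = 0 := by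
    have hr0 : (r : ℂ) ≠ 0 := ofReal_ne_zero.2 (ne_of_gt hr)
    have hpoint (θ : ℝ) : z - r * exp (θ * I) = circleMap z (-r) θ := by
      simp [circleMap, sub_eq_add_neg]
    have htangent (θ : ℝ) : I * exp (θ * I) = (-r)⁻¹ • (circleMap 0 (-r) θ * I) := by
      rw [circleMap_zero, real_smul]
      push_cast
      field_simp
    rw [← integral_Ioc_eq_integral_Ioo,
      ← intervalIntegral.integral_of_le (by linarith [Real.pi_pos])]
    simp only [hpoint, htangent, map_smul, intervalIntegral.integral_smul,
      integral_fderiv_circleMap hg, smul_zero]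
  rw [polarCoord_target, Measure.volume_eq_prod] at hint ⊢
  rw [setIntegral_prod _ hint, setIntegral_congr_fun measurableSet_Ioi hcircle]
  simp

lemma cauchyTransform_wDzbar (hg : ContDiff ℝ 1 g) (hgc : HasCompactSupport g) (z : ℂ) :
    cauchyTransform (wDzbar g) z = g z := by
  have hpolar : ∀ p ∈ polarCoord.target,
      p.1 • ((Complex.polarCoord.symm p)⁻¹ * wDzbar g (z - Complex.polarCoord.symm p)) =
        (fderiv ℝ g (z - p.1 * exp (p.2 * I)) (exp (p.2 * I)) +
          I * fderiv ℝ g (z - p.1 * exp (p.2 * I)) (I * exp (p.2 * I))) / 2 := by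
    rintro ⟨r, θ⟩ ⟨hr, -⟩
    have hr0 : (r : ℂ) ≠ 0 := ofReal_ne_zero.2 (ne_of_gt hr)
    have hsymm : Complex.polarCoord.symm (r, θ) = r * exp (θ * I) := by
      rw [Complex.polarCoord_symm_apply, exp_mul_I, ofReal_cos, ofReal_sin]
    rw [hsymm, clm_apply_add_I_mul_apply, ← inv_eq_conj (norm_exp_ofReal_mul_I θ), wDzbar,
      real_smul, mul_inv, mul_assoc, mul_inv_cancel_left₀ hr0, mul_div_assoc]
  have hcont := hg.continuous_fderiv one_ne_zero
  have hradial := integrableOn_polar_clm_apply hcont (hgc.fderiv ℝ)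
    (v := fun θ ↦ exp (θ * I)) (by fun_prop) z
  have hangular := integrableOn_polar_clm_apply hcont (hgc.fderiv ℝ)
    (v := fun θ ↦ I * exp (θ * I)) (by fun_prop) z
  rw [cauchyTransform, ← Complex.integral_comp_polarCoord_symm,
    setIntegral_congr_fun polarCoord.open_target.measurableSet hpolar, integral_div,
    integral_add hradial (hangular.const_mul I), integral_const_mul,
    integral_polar_fderiv_radial hg hgc, integral_polar_fderiv_angular hg hgc]
  field_simp [ofReal_ne_zero.2 Real.pi_ne_zero]
  ring

lemma hasFDerivAt_cauchyTransform (hg : ContDiff ℝ 1 g) (hgc : HasCompactSupport g) (z : ℂ) :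
    HasFDerivAt (cauchyTransform g) ((π : ℂ)⁻¹ • convolution (fun w : ℂ ↦ w⁻¹) (fderiv ℝ g)
      ((ContinuousLinearMap.mul ℝ ℂ).precompR ℂ) volume z) z :=
  (hgc.hasFDerivAt_convolution_right (ContinuousLinearMap.mul ℝ ℂ) locallyIntegrable_inv hg
    z).const_mul (π : ℂ)⁻¹

lemma differentiable_cauchyTransform (hg : ContDiff ℝ 1 g) (hgc : HasCompactSupport g) :
    Differentiable ℝ (cauchyTransform g) := fun z ↦
  (hasFDerivAt_cauchyTransform hg hgc z).differentiableAt

lemma fderiv_cauchyTransform_apply (hg : ContDiff ℝ 1 g) (hgc : HasCompactSupport g) (z v : ℂ) :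
    fderiv ℝ (cauchyTransform g) z v = cauchyTransform (fun w ↦ fderiv ℝ g w v) z := by
  rw [(hasFDerivAt_cauchyTransform hg hgc z).fderiv, smul_apply,
    convolution_precompR_apply (ContinuousLinearMap.mul ℝ ℂ) locallyIntegrable_inv
      (hgc.fderiv ℝ) (hg.continuous_fderiv one_ne_zero) z v]
  rfl

lemma wDzbar_cauchyTransform (hg : ContDiff ℝ 1 g) (hgc : HasCompactSupport g) (z : ℂ) :
    wDzbar (cauchyTransform g) z = g z := by
  have hint (v : ℂ) : Integrable fun w ↦ w⁻¹ * fderiv ℝ g (z - w) v := by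
    have hcont : Continuous fun w ↦ fderiv ℝ g w v :=
      (hg.continuous_fderiv one_ne_zero).clm_apply continuous_const
    have hcompact : HasCompactSupport fun w ↦ fderiv ℝ g w v := hgc.fderiv_apply ℝ v
    obtain ⟨C, hC⟩ := hcont.bounded_above_of_compact_support hcompact
    exact integrable_inv_mul_comp_sub_left (hcont.integrable_of_hasCompactSupport hcompact) hC z
  rw [← cauchyTransform_wDzbar hg hgc, wDzbar, fderiv_cauchyTransform_apply hg hgc,
    fderiv_cauchyTransform_apply hg hgc]
  simp only [cauchyTransform, wDzbar, mul_div_assoc', mul_add, mul_left_comm _ I]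
  rw [integral_div, integral_add (hint 1) ((hint I).const_mul I), integral_const_mul]
  ring

end Pompeiu

section Mollification

open scoped Pointwise

lemma integrable_of_hasCompactSupport_of_norm_le {X F : Type*} [TopologicalSpace X]
    [MeasurableSpace X] {μ : Measure X} [IsFiniteMeasureOnCompacts μ] [NormedAddCommGroup F]
    {a : X → F} {M : ℝ} (ha : AEStronglyMeasurable a μ) (hac : HasCompactSupport a)
    (hM : ∀ x, ‖a x‖ ≤ M) : Integrable a μ :=
  (integrableOn_iff_integrable_of_support_subset (subset_tsupport a)).1
    (Measure.integrableOn_of_bounded hac.isCompact.measure_lt_top.ne ha (.of_forall hM))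

variable {E F : Type*} [NormedAddCommGroup E] [NormedSpace ℝ E] [FiniteDimensional ℝ E]
  [MeasurableSpace E] [BorelSpace E] (μ : Measure E) [μ.IsAddHaarMeasure]
  [NormedAddCommGroup F] [NormedSpace ℝ F] (n : ℕ) {a : E → F} {M : ℝ}

/-- Bump functions at the origin with supports shrinking to a point; the ratio of the two radii is
kept equal to `2`, as the Lebesgue differentiation theorem requires. -/
noncomputable def mollifier (E : Type*) [NormedAddCommGroup E] [NormedSpace ℝ E]
    [FiniteDimensional ℝ E] (n : ℕ) : ContDiffBump (0 : E) where
  rIn := 1 / (n + 2)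
  rOut := 2 / (n + 2)
  rIn_pos := by positivity
  rIn_lt_rOut := by gcongr; norm_num

/-- The mollification of `a`: its convolution with a smooth probability density supported in the
ball of radius `2 / (n + 2)`. -/
noncomputable def mollify (a : E → F) : E → F :=
  convolution ((mollifier E n).normed μ) a (ContinuousLinearMap.lsmul ℝ ℝ) μ

lemma contDiff_mollify [CompleteSpace F] (ha : LocallyIntegrable a μ) {k : ℕ∞} :
    ContDiff ℝ k (mollify μ n a) :=
  (mollifier E n).hasCompactSupport_normed.contDiff_convolution_left _
    (mollifier E n).contDiff_normed ha

lemma hasCompactSupport_mollify (ha : HasCompactSupport a) : HasCompactSupport (mollify μ n a) :=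
  (mollifier E n).hasCompactSupport_normed.convolution _ ha

lemma support_mollify_subset : Function.support (mollify μ n a) ⊆ closedBall 0 1 + tsupport a := by
  have hrOut : (mollifier E n).rOut ≤ 1 := by
    change (2 : ℝ) / (n + 2) ≤ 1
    exact (div_le_one (by positivity)).2 (by linarith [n.cast_nonneg (α := ℝ)])
  refine (support_convolution_subset _).trans (add_subset_add ?_ (subset_tsupport a))
  rw [(mollifier E n).support_normed_eq]
  exact ball_subset_closedBall.trans (closedBall_subset_closedBall hrOut)

lemma norm_mollify_le [CompleteSpace F] (ha : AEStronglyMeasurable a μ) (hM : ∀ x, ‖a x‖ ≤ M)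
    (x : E) : ‖mollify μ n a x‖ ≤ M := by
  rw [← dist_zero_right]
  exact dist_convolution_le ((norm_nonneg _).trans (hM x)) (mollifier E n).support_normed_eq.subset
    (mollifier E n).nonneg_normed (mollifier E n).integral_normed ha
    fun y _ ↦ (dist_zero_right (a y)).trans_le (hM y)

variable {μ}

lemma ae_tendsto_mollify [CompleteSpace F] (ha : LocallyIntegrable a μ) :
    ∀ᵐ x ∂μ, Tendsto (fun n ↦ mollify μ n a x) atTop (𝓝 (a x)) := by
  have hrOut : Tendsto (fun n ↦ (mollifier E n).rOut) atTop (𝓝 0) :=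
    (tendsto_atTop_add_const_right _ _ tendsto_natCast_atTop_atTop).const_div_atTop 2
  have hratio (n : ℕ) : (mollifier E n).rOut ≤ 2 * (mollifier E n).rIn := (mul_one_div _ _).ge
  exact ContDiffBump.ae_convolution_tendsto_right_of_locallyIntegrable hrOut (.of_forall hratio) ha

lemma tendsto_integral_norm_mollify_sub [CompleteSpace F] (ha : AEStronglyMeasurable a μ)
    (hac : HasCompactSupport a) (hM : ∀ x, ‖a x‖ ≤ M) :
    Tendsto (fun n ↦ ∫ x, ‖mollify μ n a x - a x‖ ∂μ) atTop (𝓝 0) := by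
  have hloc : LocallyIntegrable a μ :=
    (integrable_of_hasCompactSupport_of_norm_le ha hac hM).locallyIntegrable
  set K : Set E := closedBall 0 1 + tsupport a
  have hK : IsCompact K := (isCompact_closedBall 0 1).add hac.isCompact
  have hdom (n : ℕ) (x : E) : ‖mollify μ n a x - a x‖ ≤ K.indicator (fun _ ↦ M + M) x := by
    by_cases hx : x ∈ K
    · rw [indicator_of_mem hx]
      exact (norm_sub_le _ _).trans (add_le_add (norm_mollify_le μ n ha hM x) (hM x))
    · have hmollify : mollify μ n a x = 0 :=
        Function.notMem_support.1 fun hmem ↦ hx (support_mollify_subset μ n hmem)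
      have hax : a x = 0 := image_eq_zero_of_notMem_tsupport fun hmem ↦
        hx ⟨0, mem_closedBall_self zero_le_one, x, hmem, zero_add x⟩
      simp [hx, hmollify, hax]
  rw [← integral_zero E ℝ (μ := μ)]
  refine tendsto_integral_of_dominated_convergence (K.indicator fun _ ↦ M + M) (fun n ↦ ?_)
    ((integrable_indicator_iff hK.measurableSet).2 (integrableOn_const hK.measure_lt_top.ne))
    (fun n ↦ .of_forall fun x ↦ (norm_norm _).trans_le (hdom n x)) ?_
  · exact ((contDiff_mollify μ n hloc (k := 0)).continuous.aestronglyMeasurable.sub ha).norm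
  · filter_upwards [ae_tendsto_mollify hloc] with x hx
    simpa using (hx.sub_const (a x)).norm

end Mollification

section Rectangle

open Complex
open scoped Interval

variable {E : Type*} [NormedAddCommGroup E]

lemma interior_rectangle (z w : ℂ) :
    interior (Rectangle z w) =
      Ioo (min z.re w.re) (max z.re w.re) ×ℂ Ioo (min z.im w.im) (max z.im w.im) := by
  rw [Rectangle, interior_reProdIm, uIcc, uIcc, interior_Icc, interior_Icc]

lemma isCompact_rectangle (z w : ℂ) : IsCompact (Rectangle z w) :=
  isCompact_uIcc.reProdIm isCompact_uIcc

lemma setIntegral_reProdIm [NormedSpace ℝ E] {f : ℂ → E} {s t : Set ℝ}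
    (hf : IntegrableOn f (s ×ℂ t)) :
    ∫ z in s ×ℂ t, f z = ∫ x in s, ∫ y in t, f (x + y * I) := by
  have he : MeasurableEmbedding measurableEquivRealProd.symm :=
    measurableEquivRealProd.symm.measurableEmbedding
  have hmp := volume_preserving_equiv_real_prod.symm
  have hpre : measurableEquivRealProd.symm ⁻¹' (s ×ℂ t) = s ×ˢ t := rfl
  have hint : IntegrableOn (fun p : ℝ × ℝ ↦ f (p.1 + p.2 * I)) (s ×ˢ t) := by
    simpa only [Function.comp_def, measurableEquivRealProd_symm_apply, mk_eq_add_mul_I, hpre] using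
      (hmp.integrableOn_comp_preimage he).2 hf
  rw [← hmp.setIntegral_preimage_emb he]
  simp only [measurableEquivRealProd_symm_apply, mk_eq_add_mul_I]
  exact setIntegral_prod _ hint

lemma norm_iterated_intervalIntegral_le [NormedSpace ℝ E] {f : ℂ → E} {z w : ℂ}
    (hf : IntegrableOn f (Rectangle z w)) :
    ‖∫ x : ℝ in z.re..w.re, ∫ y : ℝ in z.im..w.im, f (x + y * I)‖ ≤
      ∫ p in Rectangle z w, ‖f p‖ := by
  have hsub : Ι z.re w.re ×ℂ Ι z.im w.im ⊆ Rectangle z w :=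
    fun p hp ↦ ⟨uIoc_subset_uIcc hp.1, uIoc_subset_uIcc hp.2⟩
  calc ‖∫ x : ℝ in z.re..w.re, ∫ y : ℝ in z.im..w.im, f (x + y * I)‖
      = ‖∫ p in Ι z.re w.re ×ℂ Ι z.im w.im, f p‖ := by
        rw [setIntegral_reProdIm (hf.mono_set hsub), intervalIntegral.norm_intervalIntegral_eq]
        simp only [intervalIntegral.intervalIntegral_eq_integral_uIoc, integral_smul, norm_smul]
        split_ifs <;> simp
    _ ≤ ∫ p in Ι z.re w.re ×ℂ Ι z.im w.im, ‖f p‖ := norm_integral_le_integral_norm _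
    _ ≤ ∫ p in Rectangle z w, ‖f p‖ :=
        setIntegral_mono_set hf.norm (.of_forall fun _ ↦ norm_nonneg _) hsub.eventuallyLE

variable [NormedSpace ℂ E] {z w : ℂ} {f : ℂ → E}

/-- The integral of `f` along the boundary of the rectangle with opposite corners `z` and `w`,
started at `z` and running first horizontally, then vertically. -/
noncomputable def rectangleIntegral (z w : ℂ) (f : ℂ → E) : E :=
  wedgeIntegral z w f + wedgeIntegral w z f

lemma mapsTo_rectangle_horizontal {y : ℝ} (hy : y ∈ [[z.im, w.im]]) :
    MapsTo (fun x : ℝ ↦ (x + y * I : ℂ)) [[z.re, w.re]] (Rectangle z w) := fun x hx ↦ by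
  simpa [Rectangle, mem_reProdIm] using ⟨hx, hy⟩

lemma mapsTo_rectangle_vertical {x : ℝ} (hx : x ∈ [[z.re, w.re]]) :
    MapsTo (fun y : ℝ ↦ (x + y * I : ℂ)) [[z.im, w.im]] (Rectangle z w) := fun y hy ↦ by
  simpa [Rectangle, mem_reProdIm] using ⟨hx, hy⟩

lemma tendsto_rectangleIntegral {ι : Type*} {l : Filter ι} [l.IsCountablyGenerated]
    {F : ι → ℂ → E} (hF : ∀ᶠ n in l, ContinuousOn (F n) (Rectangle z w))
    (hlim : TendstoUniformlyOn F f l (Rectangle z w)) :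
    Tendsto (fun n ↦ rectangleIntegral z w (F n)) l (𝓝 (rectangleIntegral z w f)) := by
  have hside {γ : ℝ → ℂ} {a b : ℝ} (hγ : Continuous γ) (hmem : MapsTo γ [[a, b]] (Rectangle z w)) :
      Tendsto (fun n ↦ ∫ t in a..b, F n (γ t)) l (𝓝 (∫ t in a..b, f (γ t))) :=
    ((hlim.comp γ).mono hmem).tendsto_intervalIntegral_of_continuousOn
      (hF.mono fun n hn ↦ hn.comp hγ.continuousOn hmem)
  have hhor {y : ℝ} (hy : y ∈ [[z.im, w.im]]) :=
    hside (by fun_prop) (mapsTo_rectangle_horizontal (z := z) (w := w) hy)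
  have hver {x : ℝ} (hx : x ∈ [[z.re, w.re]]) :=
    hside (by fun_prop) (mapsTo_rectangle_vertical (z := z) (w := w) hx)
  simp only [rectangleIntegral, wedgeIntegral_add_wedgeIntegral_eq]
  exact (((hhor left_mem_uIcc).sub (hhor right_mem_uIcc)).add
    ((hver right_mem_uIcc).const_smul I)).sub ((hver left_mem_uIcc).const_smul I)

lemma rectangleIntegral_add_of_mem_uIcc {m : ℝ} (hm : m ∈ [[z.im, w.im]])
    (hf : ContinuousOn f (Rectangle z w)) :
    rectangleIntegral z (w.re + m * I) f + rectangleIntegral (z.re + m * I) w f =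
      rectangleIntegral z w f := by
  have hvertical {x : ℝ} (hx : x ∈ [[z.re, w.re]]) :
      (∫ y : ℝ in z.im..m, f (x + y * I)) + (∫ y : ℝ in m..w.im, f (x + y * I)) =
        ∫ y : ℝ in z.im..w.im, f (x + y * I) := by
    have hcont : ContinuousOn (fun y : ℝ ↦ f (x + y * I)) [[z.im, w.im]] :=
      hf.comp (by fun_prop) (mapsTo_rectangle_vertical hx)
    exact intervalIntegral.integral_add_adjacent_intervals
      (hcont.mono (uIcc_subset_uIcc_left hm)).intervalIntegrable
      (hcont.mono (uIcc_subset_uIcc_right hm)).intervalIntegrable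
  simp only [rectangleIntegral, wedgeIntegral_add_wedgeIntegral_eq,
    ← hvertical left_mem_uIcc, ← hvertical right_mem_uIcc]
  simp only [add_re, ofReal_re, mul_re, I_re, mul_zero, ofReal_im, I_im, mul_one, sub_self,
    add_zero, add_im, mul_im, zero_add, smul_add]
  abel

lemma differentiableOn_ball_of_rectangleIntegral_eq_zero [CompleteSpace E] {c : ℂ} {r m : ℝ}
    (hf : ContinuousOn f (ball c r))
    (hzero : ∀ z w, Rectangle z w ⊆ ball c r → (∀ p ∈ interior (Rectangle z w), p.im ≠ m) →
      rectangleIntegral z w f = 0) :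
    DifferentiableOn ℂ f (ball c r) := by
  refine (IsConservativeOn.isExactOn_ball hf fun z w hzw ↦ ?_).differentiableOn isOpen_ball
  rw [← add_eq_zero_iff_eq_neg]
  change rectangleIntegral z w f = 0
  by_cases hm : m ∈ [[z.im, w.im]]
  · have hlower : Rectangle z (w.re + m * I) ⊆ Rectangle z w := by
      simpa [Rectangle] using reProdIm_subset_iff.2 (prod_mono_right (uIcc_subset_uIcc_left hm))
    have hupper : Rectangle (z.re + m * I) w ⊆ Rectangle z w := by
      simpa [Rectangle] using reProdIm_subset_iff.2 (prod_mono_right (uIcc_subset_uIcc_right hm))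
    rw [← rectangleIntegral_add_of_mem_uIcc hm (hf.mono hzw),
      hzero _ _ (hlower.trans hzw), hzero _ _ (hupper.trans hzw), add_zero]
    all_goals
      rw [interior_rectangle]
      rintro p ⟨-, hlt, hgt⟩ hpm
      grind [add_im, mul_im, ofReal_im, ofReal_re, I_im, I_re]
  · exact hzero z w hzw fun p hp hpm ↦ hm (hpm ▸ (interior_subset hp).2)

lemma measurable_wDzbar (f : ℂ → ℂ) : Measurable (wDzbar f) :=
  ((measurable_fderiv_apply_const ℝ f 1).add
    ((measurable_fderiv_apply_const ℝ f I).const_mul _)).div_const _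

lemma norm_rectangleIntegral_le {f : ℂ → ℂ} {φ : ℂ → ℝ} (hf : ContinuousOn f (Rectangle z w))
    (hd : ∀ p ∈ interior (Rectangle z w), DifferentiableAt ℝ f p)
    (hφ : ∀ p ∈ interior (Rectangle z w), ‖wDzbar f p‖ ≤ φ p)
    (hφi : IntegrableOn φ (interior (Rectangle z w))) :
    ‖rectangleIntegral z w f‖ ≤ 2 * ∫ p in interior (Rectangle z w), φ p := by
  set U := interior (Rectangle z w)
  have hU : MeasurableSet U := isOpen_interior.measurableSet
  have hUK : U ⊆ Rectangle z w := interior_subset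
  set f' : ℂ → ℂ →L[ℝ] ℂ := U.indicator (fderiv ℝ f)
  set curl : ℂ → ℂ := fun p ↦ I • f' p 1 - f' p I
  have hcurl : curl = U.indicator fun p ↦ 2 * I * wDzbar f p := by
    ext p
    by_cases hp : p ∈ U
    · simp only [curl, f', indicator_of_mem hp, wDzbar, smul_eq_mul]
      linear_combination (-fderiv ℝ f p I) * I_sq
    · simp [curl, f', hp]
  have hcurl_int : IntegrableOn (fun p ↦ 2 * I * wDzbar f p) U := by
    refine (hφi.const_mul 2).mono' ?_ ((ae_restrict_iff' hU).2 (.of_forall fun p hp ↦ ?_))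
    · exact ((measurable_wDzbar f).const_mul _).aestronglyMeasurable
    · simpa using hφ p hp
  have hstokes : rectangleIntegral z w f =
      ∫ x : ℝ in z.re..w.re, ∫ y : ℝ in z.im..w.im, curl (x + y * I) := by
    rw [rectangleIntegral, wedgeIntegral_add_wedgeIntegral_eq]
    refine integral_boundary_rect_of_continuousOn_of_hasFDerivAt_real f f' z w hf
      (fun p hp ↦ ?_) ?_
    · replace hp : p ∈ U := (interior_rectangle z w).ge hp
      simpa only [f', indicator_of_mem hp] using (hd p hp).hasFDerivAt
    · change IntegrableOn curl _
      rw [hcurl]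
      exact (hcurl_int.integrable_indicator hU).integrableOn
  calc ‖rectangleIntegral z w f‖ ≤ ∫ p in Rectangle z w, ‖curl p‖ :=
        hstokes ▸ norm_iterated_intervalIntegral_le
          (hcurl ▸ (hcurl_int.integrable_indicator hU).integrableOn)
    _ = ∫ p in U, ‖2 * I * wDzbar f p‖ := by
        simp only [hcurl, norm_indicator_eq_indicator_norm]
        rw [setIntegral_indicator hU, inter_eq_right.2 hUK]
    _ ≤ ∫ p in U, 2 * φ p :=
        setIntegral_mono_on hcurl_int.norm (hφi.const_mul 2) hU fun p hp ↦ by simpa using hφ p hp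
    _ = 2 * ∫ p in U, φ p := integral_const_mul _ _

end Rectangle

section IntegratingFactor

open Complex

variable {F u v a : ℂ → ℂ} {ι : Type*} {l : Filter ι} {vₙ : ι → ℂ → ℂ}

lemma wDzbar_exp_neg_mul {z : ℂ} (hv : DifferentiableAt ℝ v z) (hF : DifferentiableAt ℝ F z) :
    wDzbar (fun w ↦ exp (-v w) * F w) z = exp (-v z) * (wDzbar F z - wDzbar v z * F z) := by
  have hderiv : HasFDerivAt (fun w ↦ exp (-v w) * F w) _ z :=
    hv.hasFDerivAt.neg.cexp.mul hF.hasFDerivAt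
  simp only [wDzbar, hderiv.fderiv, add_apply, smul_apply, neg_apply,
    Pi.neg_apply, smul_eq_mul]
  ring

lemma tendstoUniformlyOn_exp_neg_mul {K : Set ℂ} (hK : IsCompact K) (hu : ContinuousOn u K)
    (hF : ContinuousOn F K) (hlim : TendstoUniformlyOn vₙ u l K) :
    TendstoUniformlyOn (fun n z ↦ exp (-vₙ n z) * F z) (fun z ↦ exp (-u z) * F z) l K := by
  have hexp : TendstoUniformlyOn (fun n z ↦ exp (-vₙ n z)) (fun z ↦ exp (-u z)) l K :=
    hlim.neg.comp_cexp (hK.image_of_continuousOn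
      (continuous_re.comp_continuousOn hu.neg)).bddAbove
  have hconst : TendstoUniformlyOn (fun _ ↦ F) F l K :=
    fun s hs ↦ .of_forall fun _ _ _ ↦ refl_mem_uniformity hs
  exact (tendstoLocallyUniformlyOn_iff_tendstoUniformlyOn_of_compact hK).1
    (hexp.tendstoLocallyUniformlyOn.mul₀ hconst.tendstoLocallyUniformlyOn hu.neg.cexp hF)

lemma rectangleIntegral_exp_neg_mul_eq_zero [l.NeBot] [l.IsCountablyGenerated] {z w : ℂ}
    (hFc : ContinuousOn F (Rectangle z w))
    (hFd : ∀ p ∈ interior (Rectangle z w), DifferentiableAt ℝ F p)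
    (hFa : ∀ p ∈ interior (Rectangle z w), wDzbar F p = a p * F p)
    (hv : ∀ n, Differentiable ℝ (vₙ n)) (hu : TendstoUniformlyOn vₙ u l (Rectangle z w))
    (hint : ∀ n, Integrable fun p ↦ wDzbar (vₙ n) p - a p)
    (hL1 : Tendsto (fun n ↦ ∫ p, ‖wDzbar (vₙ n) p - a p‖) l (𝓝 0)) :
    rectangleIntegral z w (fun p ↦ exp (-u p) * F p) = 0 := by
  have huc : ContinuousOn u (Rectangle z w) :=
    hu.continuousOn (.of_forall fun n ↦ (hv n).continuous.continuousOn)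
  have hlim := tendstoUniformlyOn_exp_neg_mul (isCompact_rectangle z w) huc hFc hu
  have hcont (n : ι) : ContinuousOn (fun p ↦ exp (-vₙ n p) * F p) (Rectangle z w) :=
    (hv n).continuous.neg.cexp.continuousOn.mul hFc
  obtain ⟨C, hC⟩ := (isCompact_rectangle z w).exists_bound_of_continuousOn (huc.neg.cexp.mul hFc)
  have hbound : ∀ᶠ n in l, ∀ p ∈ Rectangle z w, ‖exp (-vₙ n p) * F p‖ ≤ C + 1 := by
    filter_upwards [tendstoUniformlyOn_iff.1 hlim 1 one_pos] with n hn p hp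
    have hdist := (dist_eq_norm' _ _).symm.trans_lt (hn p hp)
    have hCp : ‖exp (-u p) * F p‖ ≤ C := hC p hp
    linarith [norm_le_norm_add_norm_sub' (exp (-vₙ n p) * F p) (exp (-u p) * F p)]
  have hstokes : ∀ᶠ n in l, ‖rectangleIntegral z w (fun p ↦ exp (-vₙ n p) * F p)‖ ≤
      2 * ((C + 1) * ∫ p, ‖wDzbar (vₙ n) p - a p‖) := by
    filter_upwards [hbound] with n hn
    have hCz : 0 ≤ C + 1 := (norm_nonneg _).trans (hn z ⟨left_mem_uIcc, left_mem_uIcc⟩)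
    refine (norm_rectangleIntegral_le (φ := fun p ↦ (C + 1) * ‖wDzbar (vₙ n) p - a p‖) (hcont n)
      (fun p hp ↦ (hv n p).neg.cexp.mul (hFd p hp)) (fun p hp ↦ ?_)
      ((hint n).norm.const_mul _).integrableOn).trans ?_
    · rw [wDzbar_exp_neg_mul (hv n p) (hFd p hp), hFa p hp, ← sub_mul, mul_comm _ (F p),
        ← mul_assoc, norm_mul, norm_sub_rev]
      exact mul_le_mul_of_nonneg_right (hn p (interior_subset hp)) (norm_nonneg _)
    · gcongr
      rw [integral_const_mul]
      exact mul_le_mul_of_nonneg_left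
        (setIntegral_le_integral (hint n).norm (.of_forall fun _ ↦ norm_nonneg _)) hCz
  refine tendsto_nhds_unique (tendsto_rectangleIntegral (.of_forall hcont) hlim)
    (squeeze_zero_norm' hstokes ?_)
  simpa using (hL1.const_mul (C + 1)).const_mul 2

end IntegratingFactor

section Similarity

open Complex

lemma exists_norm_le_eq_mul_of_norm_le_mul {X : Type*} [MeasurableSpace X] {μ : Measure X}
    {S : Set X} (hS : MeasurableSet S) {f g : X → ℂ} (hf : AEMeasurable f (μ.restrict S))
    (hg : AEMeasurable g (μ.restrict S)) {M : ℝ} (hM : ∀ x ∈ S, ‖g x‖ ≤ M * ‖f x‖) :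
    ∃ a : X → ℂ, AEStronglyMeasurable a μ ∧ (∀ x, ‖a x‖ ≤ |M|) ∧ Function.support a ⊆ S ∧
      ∀ x ∈ S, g x = a x * f x := by
  refine ⟨S.indicator fun x ↦ g x / f x, ?_, fun x ↦ ?_, support_indicator_subset, fun x hx ↦ ?_⟩
  · exact ((aemeasurable_indicator_iff hS).2 (hg.div hf)).aestronglyMeasurable
  · by_cases hx : x ∈ S
    · rw [indicator_of_mem hx, norm_div]
      exact div_le_of_le_mul₀ (norm_nonneg _) (abs_nonneg M)
        ((hM x hx).trans (mul_le_mul_of_nonneg_right (le_abs_self M) (norm_nonneg _)))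
    · simp [hx]
  · rw [indicator_of_mem hx]
    refine (div_mul_cancel_of_imp fun hfx ↦ ?_).symm
    simpa [hfx] using hM x hx

variable {F u : ℂ → ℂ}

theorem exists_differentiableOn_exp_neg_mul {c : ℂ} {r m M : ℝ} (hFc : ContinuousOn F (ball c r))
    (hFd : ∀ z ∈ ball c r, z.im ≠ m → DifferentiableAt ℝ F z)
    (hM : ∀ z ∈ ball c r, z.im ≠ m → ‖wDzbar F z‖ ≤ M * ‖F z‖) :
    ∃ u : ℂ → ℂ, Continuous u ∧ DifferentiableOn ℂ (fun z ↦ exp (-u z) * F z) (ball c r) := by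
  set S : Set ℂ := ball c r ∩ {z | z.im ≠ m}
  have hS : MeasurableSet S :=
    (isOpen_ball.inter (isOpen_ne_fun continuous_im continuous_const)).measurableSet
  obtain ⟨a, ham, haM, haS, haF⟩ := exists_norm_le_eq_mul_of_norm_le_mul (μ := volume) hS
    ((hFc.mono inter_subset_left).aemeasurable hS) (measurable_wDzbar F).aemeasurable
    fun z hz ↦ hM z hz.1 hz.2
  have hac : HasCompactSupport a := .of_support_subset_isCompact (isCompact_closedBall c r)
    (haS.trans (inter_subset_left.trans ball_subset_closedBall))
  have hai : Integrable a := integrable_of_hasCompactSupport_of_norm_le ham hac haM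
  set b : ℕ → ℂ → ℂ := fun n ↦ mollify volume n a
  have hb (n : ℕ) : ContDiff ℝ 1 (b n) := contDiff_mollify volume n hai.locallyIntegrable
  have hbc (n : ℕ) : HasCompactSupport (b n) := hasCompactSupport_mollify volume n hac
  have hbi (n : ℕ) : Integrable (b n) := (hb n).continuous.integrable_of_hasCompactSupport (hbc n)
  have hba := tendsto_integral_norm_mollify_sub ham hac haM
  have hv (n : ℕ) : Differentiable ℝ (cauchyTransform (b n)) :=
    differentiable_cauchyTransform (hb n) (hbc n)
  have hvb (n : ℕ) : wDzbar (cauchyTransform (b n)) = b n :=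
    funext (wDzbar_cauchyTransform (hb n) (hbc n))
  have hlim : TendstoUniformly (fun n ↦ cauchyTransform (b n)) (cauchyTransform a) atTop :=
    tendstoUniformly_cauchyTransform hai hbi haM (fun n ↦ norm_mollify_le volume n ham haM) hba
  have hu : Continuous (cauchyTransform a) := hlim.continuous (.of_forall fun n ↦ (hv n).continuous)
  refine ⟨cauchyTransform a, hu, differentiableOn_ball_of_rectangleIntegral_eq_zero (m := m)
    (hu.neg.cexp.continuousOn.mul hFc) fun z w hzw hm ↦ ?_⟩
  have hpS {p : ℂ} (hp : p ∈ interior (Rectangle z w)) : p ∈ S :=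
    ⟨hzw (interior_subset hp), hm p hp⟩
  exact rectangleIntegral_exp_neg_mul_eq_zero (hFc.mono hzw)
    (fun p hp ↦ hFd p (hpS hp).1 (hpS hp).2) (fun p hp ↦ haF p (hpS hp)) hv hlim.tendstoUniformlyOn
    (fun n ↦ by rw [hvb]; exact (hbi n).sub hai) (by simpa only [hvb] using hba)

lemma eventually_eq_zero_or_eventually_eq_pow_mul {z₀ : ℂ} (hu : Continuous u)
    (hF : AnalyticAt ℂ (fun z ↦ exp (-u z) * F z) z₀) :
    (∀ᶠ z in 𝓝 z₀, F z = 0) ∨ ∃ (k : ℕ) (ft : ℂ → ℂ), ft z₀ ≠ 0 ∧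
      ∀ᶠ z in 𝓝 z₀, ContinuousAt ft z ∧ F z = (z - z₀) ^ k * ft z := by
  by_cases hzero : ∀ᶠ z in 𝓝 z₀, exp (-u z) * F z = 0
  · exact .inl (hzero.mono fun z hz ↦ (mul_eq_zero.1 hz).resolve_left (exp_ne_zero _))
  obtain ⟨k, g, hg, hg₀, hgF⟩ := hF.exists_eventuallyEq_pow_smul_nonzero_iff.2 hzero
  refine .inr ⟨k, fun z ↦ exp (u z) * g z, mul_ne_zero (exp_ne_zero _) hg₀, ?_⟩
  filter_upwards [hgF, hg.eventually_analyticAt] with z hz hgz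
  refine ⟨hu.cexp.continuousAt.mul hgz.continuousAt, ?_⟩
  calc F z = exp (u z) * (exp (-u z) * F z) := by rw [← mul_assoc, ← exp_add]; simp
    _ = (z - z₀) ^ k * (exp (u z) * g z) := by rw [hz, smul_eq_mul, mul_left_comm]

end Similarity

section Reflection

open Complex

variable {f : ℂ → ℂ} {U : Set ℂ} {z : ℂ}

/-- The Schwarz reflection of `f`: the function that agrees with `f` on the closed upper half-plane
and is extended to the lower half-plane by conjugation symmetry. -/
noncomputable def schwarzReflection (f : ℂ → ℂ) (z : ℂ) : ℂ :=
  if 0 ≤ z.im then f z else conj (f (conj z))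

lemma schwarzReflection_of_im_nonneg (hz : 0 ≤ z.im) : schwarzReflection f z = f z := if_pos hz

lemma continuousOn_schwarzReflection (hU : ∀ z ∈ U, conj z ∈ U)
    (hf : ContinuousOn f (U ∩ {z | 0 ≤ z.im})) (hreal : ∀ z ∈ U, z.im = 0 → (f z).im = 0) :
    ContinuousOn (schwarzReflection f) U := by
  have hclosure_nonneg : closure {z : ℂ | 0 ≤ z.im} = {z | 0 ≤ z.im} :=
    (isClosed_le continuous_const continuous_im).closure_eq
  have hclosure_neg : closure {z : ℂ | ¬0 ≤ z.im} = {z | z.im ≤ 0} := by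
    simpa only [not_le] using closure_setOfPred_im_lt 0
  refine ContinuousOn.if (fun z hz ↦ ?_) (by rwa [hclosure_nonneg]) ?_
  · rw [frontier_setOfPred_le_im] at hz
    rw [conj_eq_iff_im.2 hz.2, conj_eq_iff_im.2 (hreal z hz.1 hz.2)]
  · rw [hclosure_neg]
    exact continuous_conj.comp_continuousOn (hf.comp continuous_conj.continuousOn fun z hz ↦
      ⟨hU z hz.1, by simpa using hz.2⟩)

lemma schwarzReflection_eventuallyEq_of_im_pos (hz : 0 < z.im) : schwarzReflection f =ᶠ[𝓝 z] f :=
  ((isOpen_lt continuous_const continuous_im).eventually_mem hz).mono fun _ hw ↦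
    if_pos (le_of_lt hw)

lemma schwarzReflection_eventuallyEq_of_im_neg (hz : z.im < 0) :
    schwarzReflection f =ᶠ[𝓝 z] fun w ↦ conj (f (conj w)) :=
  ((isOpen_lt continuous_im continuous_const).eventually_mem hz).mono fun _ hw ↦
    if_neg (not_le_of_gt hw)

lemma hasFDerivAt_conj_comp_conj (hf : DifferentiableAt ℝ f (conj z)) :
    HasFDerivAt (fun w ↦ conj (f (conj w)))
      ((conjCLE : ℂ →L[ℝ] ℂ) ∘L fderiv ℝ f (conj z) ∘L (conjCLE : ℂ →L[ℝ] ℂ)) z :=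
  have hconj (w : ℂ) : HasFDerivAt (fun w : ℂ ↦ conj w) (conjCLE : ℂ →L[ℝ] ℂ) w :=
    conjCLE.hasFDerivAt
  (hconj _).comp z (hf.hasFDerivAt.comp z (hconj z))

lemma wDzbar_conj_comp_conj (hf : DifferentiableAt ℝ f (conj z)) :
    wDzbar (fun w ↦ conj (f (conj w))) z = conj (wDzbar f (conj z)) := by
  have hconj_two : conj (2 : ℂ) = 2 := map_ofNat _ 2
  simp [wDzbar, (hasFDerivAt_conj_comp_conj hf).fderiv, hconj_two]

lemma differentiableAt_schwarzReflection (hU : ∀ z ∈ U, conj z ∈ U)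
    (hf : ∀ z ∈ U, 0 < z.im → DifferentiableAt ℝ f z) (hz : z ∈ U) (hz₀ : z.im ≠ 0) :
    DifferentiableAt ℝ (schwarzReflection f) z := by
  rcases hz₀.lt_or_gt with hneg | hpos
  · have hd := hf (conj z) (hU z hz) (by simpa using hneg)
    exact (hasFDerivAt_conj_comp_conj hd).differentiableAt.congr_of_eventuallyEq
      (schwarzReflection_eventuallyEq_of_im_neg hneg)
  · exact (hf z hz hpos).congr_of_eventuallyEq (schwarzReflection_eventuallyEq_of_im_pos hpos)

lemma wDzbar_congr {g : ℂ → ℂ} (h : f =ᶠ[𝓝 z] g) : wDzbar f z = wDzbar g z := by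
  rw [wDzbar, wDzbar, h.fderiv_eq]

lemma norm_wDzbar_schwarzReflection_le {M : ℝ} (hU : ∀ z ∈ U, conj z ∈ U)
    (hf : ∀ z ∈ U, 0 < z.im → DifferentiableAt ℝ f z)
    (hM : ∀ z ∈ U, 0 < z.im → ‖wDzbar f z‖ ≤ M * ‖f z‖) (hz : z ∈ U) (hz₀ : z.im ≠ 0) :
    ‖wDzbar (schwarzReflection f) z‖ ≤ M * ‖schwarzReflection f z‖ := by
  rcases hz₀.lt_or_gt with hneg | hpos
  · have hreflect := schwarzReflection_eventuallyEq_of_im_neg (f := f) hneg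
    have hpos : 0 < (conj z).im := by simpa using hneg
    rw [wDzbar_congr hreflect, hreflect.eq_of_nhds, wDzbar_conj_comp_conj (hf _ (hU z hz) hpos),
      norm_conj, norm_conj]
    exact hM _ (hU z hz) hpos
  · rw [wDzbar_congr (schwarzReflection_eventuallyEq_of_im_pos hpos),
      schwarzReflection_of_im_nonneg hpos.le]
    exact hM z hz hpos

end Reflection

section UpperHalf

open Asymptotics

variable {D : Set ℂ} {f : ℂ → ℂ}

lemma inter_im_nonneg_subset_closure (hD : IsOpen D) :
    D ∩ {z | 0 ≤ z.im} ⊆ closure {z ∈ D | 0 < z.im} := by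
  rw [← Complex.closure_setOfPred_lt_im 0]
  exact hD.inter_closure

lemma closure_sep_im_pos_subset : closure {z ∈ D | 0 < z.im} ⊆ {z | 0 ≤ z.im} :=
  closure_minimal (fun _ hz ↦ le_of_lt hz.2) (isClosed_le continuous_const Complex.continuous_im)

lemma eventually_im_nonneg_eq_zero_or_eq_pow_mul {r M : ℝ} (hr : 0 < r)
    (hfc : ContinuousOn f (ball 0 r ∩ {z | 0 ≤ z.im}))
    (hfd : ∀ z ∈ ball 0 r, 0 < z.im → DifferentiableAt ℝ f z)
    (hreal : ∀ z ∈ ball 0 r, z.im = 0 → (f z).im = 0)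
    (hM : ∀ z ∈ ball 0 r, 0 < z.im → ‖wDzbar f z‖ ≤ M * ‖f z‖) :
    (∀ᶠ z in 𝓝 0, 0 ≤ z.im → f z = 0) ∨ ∃ (k : ℕ) (ft : ℂ → ℂ), ft 0 ≠ 0 ∧
      ∀ᶠ z in 𝓝 0, ContinuousAt ft z ∧ (0 ≤ z.im → f z = z ^ k * ft z) := by
  have hconj : ∀ z ∈ ball (0 : ℂ) r, conj z ∈ ball 0 r := fun z hz ↦ by simpa using hz
  obtain ⟨u, hu, hF⟩ := exists_differentiableOn_exp_neg_mul (m := 0)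
    (continuousOn_schwarzReflection hconj hfc hreal)
    (fun z ↦ differentiableAt_schwarzReflection hconj hfd)
    (fun z ↦ norm_wDzbar_schwarzReflection_le hconj hfd hM)
  rcases eventually_eq_zero_or_eventually_eq_pow_mul hu
    (hF.analyticAt (ball_mem_nhds 0 hr)) with hzero | ⟨k, ft, hft, hpow⟩
  · exact .inl (hzero.mono fun z hz him ↦ (schwarzReflection_of_im_nonneg him).symm.trans hz)
  · refine .inr ⟨k, ft, hft, hpow.mono fun z hz ↦ ⟨hz.1, fun him ↦ ?_⟩⟩
    rw [← schwarzReflection_of_im_nonneg (f := f) him, hz.2, sub_zero]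

lemma isBigO_nhdsWithin_of_norm_le_mul {X E F : Type*} [TopologicalSpace X] [Norm E]
    [SeminormedAddCommGroup F] {g : X → E} {f : X → F} {h : X → ℝ} {s : Set X} {x : X}
    (hh : ContinuousWithinAt h s x) (hgf : ∀ y ∈ s, ‖g y‖ ≤ h y * ‖f y‖) : g =O[𝓝[s] x] f := by
  refine .of_bound (h x + 1) ?_
  filter_upwards [hh.tendsto.eventually_le_const (lt_add_one (h x)), self_mem_nhdsWithin]
    with y hy hys
  exact (hgf y hys).trans (mul_le_mul_of_nonneg_right hy (norm_nonneg _))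

theorem stmt16_general (hD : IsOpen D) (hD₀ : 0 ∈ D)
    (hfc : ContinuousOn f (closure {z ∈ D | 0 < z.im}))
    (hfd : DifferentiableOn ℝ f {z ∈ D | 0 < z.im})
    (hfreal : ∀ z ∈ D, z.im = 0 → (f z).im = 0)
    (hbound : wDzbar f =O[𝓝[{z ∈ D | 0 < z.im}] 0] f) (hf0 : f 0 = 0) :
    (∃ V : Set ℂ, IsOpen V ∧ (0 : ℂ) ∈ V ∧ ∀ z ∈ V ∩ closure {z ∈ D | 0 < z.im}, f z = 0) ∨
    (∃ k : ℕ, 1 ≤ k ∧ ∃ V : Set ℂ, IsOpen V ∧ (0 : ℂ) ∈ V ∧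
      ∃ ft : ℂ → ℂ, ContinuousOn ft (V ∩ closure {z ∈ D | 0 < z.im}) ∧ ft 0 ≠ 0 ∧
        ∀ z ∈ V ∩ closure {z ∈ D | 0 < z.im}, f z = z ^ k * ft z) := by
  obtain ⟨M, hM⟩ := hbound.bound
  obtain ⟨r, hr, hball⟩ := Metric.eventually_nhds_iff_ball.1
    ((hD.eventually_mem hD₀).and (eventually_nhdsWithin_iff.1 hM))
  have hDp : IsOpen {z ∈ D | 0 < z.im} :=
    hD.inter (isOpen_lt continuous_const Complex.continuous_im)
  rcases eventually_im_nonneg_eq_zero_or_eq_pow_mul hr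
    (hfc.mono fun z hz ↦ inter_im_nonneg_subset_closure hD ⟨(hball z hz.1).1, hz.2⟩)
    (fun z hz him ↦ hfd.differentiableAt (hDp.mem_nhds ⟨(hball z hz).1, him⟩))
    (fun z hz ↦ hfreal z (hball z hz).1) (fun z hz him ↦ (hball z hz).2 ⟨(hball z hz).1, him⟩)
    with hzero | ⟨k, ft, hft, hpow⟩
  · obtain ⟨V, hV, hVo, hV₀⟩ := _root_.eventually_nhds_iff.1 hzero
    exact .inl ⟨V, hVo, hV₀, fun z hz ↦ hV z hz.1 (closure_sep_im_pos_subset hz.2)⟩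
  · have hk : k ≠ 0 := by
      rintro rfl
      exact hft (by simpa [hf0] using (hpow.self_of_nhds.2 le_rfl).symm)
    obtain ⟨V, hV, hVo, hV₀⟩ := _root_.eventually_nhds_iff.1 hpow
    exact .inr ⟨k, Nat.one_le_iff_ne_zero.2 hk, V, hVo, hV₀, ft,
      fun z hz ↦ (hV z hz.1).1.continuousWithinAt, hft,
      fun z hz ↦ (hV z hz.1).2 (closure_sep_im_pos_subset hz.2)⟩

end UpperHalf

end SimilarityPrinciple

/-- Boundary variant of the similarity principle: if `f` is continuous on the closed upper
half-disk, `C¹` and satisfying `|∂_z̄ f| ≤ h |f|` on the open upper half-disk, real on the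
real diameter, and `f(0) = 0`, then either `f ≡ 0` near `0` or `f(z) = z^k f̃(z)` with `f̃`
continuous and `f̃(0) ≠ 0`. -/
theorem stmt16
    (D : Set ℂ) (hD : D = Metric.ball (0:ℂ) 1)
    (Dp : Set ℂ) (hDp : Dp = {z ∈ D | 0 < z.im})
    (f : ℂ → ℂ)
    (hfc : ContinuousOn f (closure Dp))
    (hf1 : ContDiffOn ℝ 1 f Dp)
    (hfreal : ∀ z ∈ D, z.im = 0 → (f z).im = 0)
    (h : ℂ → ℝ) (hh : ContinuousOn h (closure D))
    (hhnn : ∀ z ∈ closure D, 0 ≤ h z)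
    (hineq : ∀ z ∈ Dp, ‖wDzbar f z‖ ≤ h z * ‖f z‖)
    (hf0 : f 0 = 0) :
    (∃ V : Set ℂ, IsOpen V ∧ (0:ℂ) ∈ V ∧ ∀ z ∈ V ∩ closure Dp, f z = 0) ∨
    (∃ k : ℕ, 1 ≤ k ∧ ∃ V : Set ℂ, IsOpen V ∧ (0:ℂ) ∈ V ∧
      ∃ ft : ℂ → ℂ, ContinuousOn ft (V ∩ closure Dp) ∧ ft 0 ≠ 0 ∧
        ∀ z ∈ V ∩ closure Dp, f z = z ^ k * ft z) := by
  subst hD hDp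
  exact stmt16_general Metric.isOpen_ball (Metric.mem_ball_self one_pos) hfc
    (hf1.differentiableOn one_ne_zero) hfreal
    (isBigO_nhdsWithin_of_norm_le_mul ((hh 0 (subset_closure (Metric.mem_ball_self one_pos))).mono
      fun z hz ↦ subset_closure hz.1) hineq) hf0
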